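/- Let G be a countably infinite discrete amenable group, X an infinite compact metrizable space, and α: G ↷ X a minimal free continuous action. If E_G(X) is compact and zero-dimensional in the weak* topology, then α has the small boundary property. -/

import Mathlib

open MeasureTheory Set Pointwise

variable (G X : Type*)

section Defs

variable [Group G] [MetricSpace X] [MeasurableSpace X] [MulAction G X]

/-- A Borel probability measure is `G`-invariant. -/
def InvariantMeasure (μ : ProbabilityMeasure X) : Prop :=
  ∀ g : G, MeasureTheory.Measure.map (fun x => g • x) (μ : Measure X) = (μ : Measure X)

/-- `M_G(X)`: the set of `G`-invariant Borel probability measures on `X`. -/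
def MG : Set (ProbabilityMeasure X) := {μ | InvariantMeasure G X μ}

/-- `E_G(X)`: the set of ergodic `G`-invariant Borel probability measures on `X`,
i.e. invariant measures giving every `G`-invariant Borel set measure `0` or `1`. -/
def EG : Set (ProbabilityMeasure X) :=
  {μ | InvariantMeasure G X μ ∧
    ∀ A : Set X, MeasurableSet A → (∀ g : G, g • A = A) → μ A = 0 ∨ μ A = 1}

/-- The action of `G` on `X` is free. -/
def FreeAction : Prop := ∀ (g : G) (x : X), g • x = x → g = 1

/-- The action of `G` on `X` is minimal: there is no proper nonempty closed invariant subset. -/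
def MinimalAction : Prop :=
  ∀ C : Set X, IsClosed C → (∀ g : G, g • C ⊆ C) → C = ∅ ∨ C = Set.univ

/-- The small boundary property. -/
def SmallBoundaryProperty : Prop :=
  ∀ (x : X) (U : Set X), IsOpen U → x ∈ U →
    ∃ V : Set X, IsOpen V ∧ x ∈ V ∧ V ⊆ U ∧ ∀ μ ∈ MG G X, μ (frontier V) = 0

/-- `S` is a `(K,δ)`-invariant finite subset of `G`. -/
def FolnerInv (K : Finset G) (δ : ℝ) (S : Finset G) : Prop :=
  (1 - δ) * (S.card : ℝ) ≤ ({s | s ∈ S ∧ ∀ k ∈ K, k * s ∈ S} : Set G).ncard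

/-- `G` is amenable: it admits `(K,δ)`-invariant nonempty finite subsets for all `K, δ`. -/
def AmenableGroup : Prop :=
  ∀ (K : Finset G) (δ : ℝ), 0 < δ → ∃ S : Finset G, S.Nonempty ∧ FolnerInv G K δ S

/-- `(S, V)` is a tower: the translates `s • V`, `s ∈ S`, are pairwise disjoint. -/
def IsTower (S : Finset G) (V : Set X) : Prop :=
  (S : Set G).Pairwise fun s t => Disjoint (s • V) (t • V)

/-- `F ≺_m O`: subordination with `m`-colored multiplicity. -/
def SubordinateM (m : ℕ) (F O : Set X) : Prop :=
  ∃ (n : ℕ) (U : Fin n → Set X) (s : Fin n → G) (c : Fin n → Fin (m + 1)),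
    (∀ k, IsOpen (U k)) ∧ F ⊆ ⋃ k, U k ∧ (∀ k, s k • U k ⊆ O) ∧
    ∀ k l, k ≠ l → c k = c l → Disjoint (s k • U k) (s l • U l)

/-- The action has dynamical `m`-comparison. -/
def HasMComparison (m : ℕ) : Prop :=
  ∀ F O : Set X, IsClosed F → IsOpen O →
    (∀ μ ∈ MG G X, μ F < μ O) → SubordinateM G X m F O

/-- The action is `m`-almost finite. -/
def MAlmostFinite (m : ℕ) : Prop :=
  ∀ (n : ℕ), 1 ≤ n → ∀ (K : Finset G) (δ : ℝ), 0 < δ →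
    ∃ (I : ℕ) (S : Fin I → Finset G) (V : Fin I → Set X) (c : Fin I → Fin (m + 1))
      (S' : Fin I → Finset G),
      (∀ i, IsOpen (V i)) ∧
      (∀ i, IsTower G X (S i) (closure (V i))) ∧
      (∀ i, FolnerInv G K δ (S i)) ∧
      (∀ i, ∀ s ∈ S i, Metric.diam (s • closure (V i)) < δ) ∧
      (∀ i j, i ≠ j → c i = c j →
        Disjoint ((S i : Set G) • closure (V i)) ((S j : Set G) • closure (V j))) ∧
      (∀ i, S' i ⊆ S i) ∧ (∀ i, ((S' i).card : ℝ) ≤ (S i).card / n) ∧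
      SubordinateM G X 0 (Set.univ \ ⋃ i, (S i : Set G) • V i) (⋃ i, (S' i : Set G) • V i)

end Defs


set_option linter.unusedSectionVars false

section Helpers

open Filter Topology

variable {G X : Type*} [Group G] [MetricSpace X] [CompactSpace X]
    [MeasurableSpace X] [BorelSpace X] [MulAction G X] [ContinuousConstSMul G X]

/-- translate of a continuous function -/
noncomputable def ktrans (g : G) (f : C(X, ℝ)) : C(X, ℝ) :=
  f.comp ⟨fun x => g • x, continuous_const_smul g⟩

theorem ktrans_apply (g : G) (f : C(X, ℝ)) (x : X) : ktrans g f x = f (g • x) := rfl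

/-- Følner average of a continuous function -/
noncomputable def favg (F : Finset G) (f : C(X, ℝ)) : C(X, ℝ) :=
  (F.card : ℝ)⁻¹ • ∑ s ∈ F, ktrans s f

theorem favg_apply (F : Finset G) (f : C(X, ℝ)) (x : X) :
    favg F f x = (F.card : ℝ)⁻¹ * ∑ s ∈ F, f (s • x) := by
  simp [favg, ktrans_apply]

theorem integrable_cont (μ : ProbabilityMeasure X) (f : C(X, ℝ)) :
    Integrable (fun x => f x) (μ : Measure X) :=
  f.continuous.integrable_of_hasCompactSupport (HasCompactSupport.of_compactSpace _)

theorem inv_integral {μ : ProbabilityMeasure X} (hμ : InvariantMeasure G X μ) (g : G)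
    (f : C(X, ℝ)) : ∫ x, f (g • x) ∂(μ : Measure X) = ∫ x, f x ∂(μ : Measure X) := by
  have h := hμ g
  conv_rhs => rw [← h]
  rw [integral_map]
  · exact (continuous_const_smul g).measurable.aemeasurable
  · exact f.continuous.aestronglyMeasurable

theorem eventually_closed_lt {C : Set X} (hC : IsClosed C) (μ₀ : ProbabilityMeasure X)
    {ε : ENNReal} (h : (μ₀ : Measure X) C < ε) :
    ∀ᶠ μ : ProbabilityMeasure X in 𝓝 μ₀, (μ : Measure X) C < ε := by
  have := ProbabilityMeasure.limsup_measure_closed_le_of_tendsto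
    (μs := fun μ : ProbabilityMeasure X => μ) (L := 𝓝 μ₀) tendsto_id hC
  exact eventually_lt_of_limsup_lt (lt_of_le_of_lt this h)

theorem favg_dist_le {μ : ProbabilityMeasure X} (hμ : InvariantMeasure G X μ) (c : ℝ)
    (f : C(X, ℝ)) (F : Finset G) (hF : F.Nonempty) :
    ∫ x, |favg F f x - c| ∂(μ : Measure X) ≤ ∫ x, |f x - c| ∂(μ : Measure X) := by
  have hc : (0 : ℝ) < F.card := by exact_mod_cast hF.card_pos
  let h : C(X, ℝ) := ⟨fun x => |f x - c|, by fun_prop⟩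
  have h1 : ∀ x, |favg F f x - c| ≤ (F.card : ℝ)⁻¹ * ∑ s ∈ F, h (s • x) := by
    intro x
    have : favg F f x - c = (F.card : ℝ)⁻¹ * ∑ s ∈ F, (f (s • x) - c) := by
      rw [favg_apply, Finset.sum_sub_distrib]
      simp
      field_simp
    rw [this, abs_mul, abs_of_pos (inv_pos.2 hc)]
    gcongr
    exact Finset.abs_sum_le_sum_abs _ _
  calc ∫ x, |favg F f x - c| ∂(μ : Measure X)
      ≤ ∫ x, (F.card : ℝ)⁻¹ * ∑ s ∈ F, h (s • x) ∂(μ : Measure X) := by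
        apply integral_mono _ _ h1
        · exact integrable_cont μ ⟨fun x => |favg F f x - c|, by fun_prop⟩
        · exact integrable_cont μ (favg F h) |>.congr (.of_forall fun x => favg_apply F h x)
    _ = (F.card : ℝ)⁻¹ * ∑ s ∈ F, ∫ x, h (s • x) ∂(μ : Measure X) := by
        rw [integral_const_mul, integral_finsetSum]
        intro s _
        exact integrable_cont μ (ktrans s h)
    _ = ∫ x, h x ∂(μ : Measure X) := by
        simp only [inv_integral hμ]
        simp
        field_simp

theorem folner_near [Countable G] (f : C(X, ℝ)) (u : C(X, ℝ))
    (hu : u ∈ convexHull ℝ (range fun g : G => ktrans g f)) (ε : ℝ) (hε : 0 < ε) :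
    ∃ (K : Finset G) (δ : ℝ), 0 < δ ∧ ∀ F : Finset G, F.Nonempty → FolnerInv G K δ F →
      ∀ x, |favg F u x - favg F f x| ≤ ε := by
  classical
  let P : Set C(X, ℝ) := {u | ∀ ε > 0, ∃ (K : Finset G) (δ : ℝ), 0 < δ ∧ ∀ F : Finset G,
    F.Nonempty → FolnerInv G K δ F → ∀ x, |favg F u x - favg F f x| ≤ ε}
  suffices h : convexHull ℝ (range fun g : G => ktrans g f) ⊆ P from h hu ε hε
  apply convexHull_min
  · rintro _ ⟨g, rfl⟩ ε hε
    refine ⟨{g}, ε / (2 * ‖f‖ + 1), by positivity, ?_⟩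
    intro F hF hFol x
    have hc : (0 : ℝ) < F.card := by exact_mod_cast hF.card_pos
    set A : Finset G := F.filter (fun s => g * s ∈ F) with hA
    have hAc : (1 - ε / (2 * ‖f‖ + 1)) * F.card ≤ A.card := by
      have := hFol
      unfold FolnerInv at this
      convert this
      rw [← Set.ncard_coe_finset]
      congr 1
      ext s; simp [hA]
    -- two sums
    have e1 : ∑ s ∈ F, f ((g * s) • x) = ∑ s ∈ F.image (g * ·), f (s • x) := by
      rw [Finset.sum_image]
      intro a _ b _ h
      exact mul_left_cancel h
    have hAi : A.image (g * ·) ⊆ F := by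
      intro s hs
      simp only [hA, Finset.mem_image, Finset.mem_filter] at hs
      obtain ⟨a, ⟨_, h⟩, rfl⟩ := hs
      exact h
    have e2 : ∑ s ∈ F, f ((g * s) • x) = ∑ s ∈ A, f ((g * s) • x)
        + ∑ s ∈ F \ A, f ((g * s) • x) := by
      rw [add_comm, Finset.sum_sdiff (Finset.filter_subset _ _)]
    have e3 : ∑ s ∈ F, f (s • x) = ∑ s ∈ A, f ((g * s) • x)
        + ∑ s ∈ F \ A.image (g * ·), f (s • x) := by
      rw [← Finset.sum_sdiff hAi, add_comm, Finset.sum_image]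
      intro a _ b _ h
      exact mul_left_cancel h
    have hb : ∀ y, |f y| ≤ ‖f‖ := fun y => f.norm_coe_le_norm y
    have c1 : ((F \ A).card : ℝ) = F.card - A.card := by
      rw [Finset.card_sdiff_of_subset (Finset.filter_subset _ _),
        Nat.cast_sub (Finset.card_le_card (Finset.filter_subset _ _))]
    have c2 : ((F \ A.image (g * ·)).card : ℝ) = F.card - A.card := by
      have : (A.image (g * ·)).card = A.card := Finset.card_image_of_injective _ (mul_right_injective g)
      rw [Finset.card_sdiff_of_subset hAi, Nat.cast_sub (Finset.card_le_card hAi), this]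
    have b1 : |∑ s ∈ F \ A, f ((g * s) • x)| ≤ (F.card - A.card) * ‖f‖ := by
      refine (Finset.abs_sum_le_sum_abs _ _).trans ((Finset.sum_le_card_nsmul _ _ ‖f‖ fun s _ => hb _).trans ?_)
      rw [nsmul_eq_mul, c1]
    have b2 : |∑ s ∈ F \ A.image (g * ·), f (s • x)| ≤ (F.card - A.card) * ‖f‖ := by
      refine (Finset.abs_sum_le_sum_abs _ _).trans ((Finset.sum_le_card_nsmul _ _ ‖f‖ fun s _ => hb _).trans ?_)
      rw [nsmul_eq_mul, c2]
    rw [favg_apply, favg_apply, ← mul_sub, abs_mul, abs_of_pos (inv_pos.2 hc), inv_mul_le_iff₀ hc]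
    simp only [ktrans_apply, smul_smul]
    rw [e2, e3, add_sub_add_left_eq_sub]
    refine (abs_sub _ _).trans ((add_le_add b1 b2).trans ?_)
    have h1 : (F.card : ℝ) - A.card ≤ ε / (2 * ‖f‖ + 1) * F.card := by linarith
    have h2 : ε / (2 * ‖f‖ + 1) * (2 * ‖f‖) ≤ ε := by
      rw [div_mul_eq_mul_div, div_le_iff₀ (by positivity)]
      nlinarith [norm_nonneg f]
    calc (F.card - A.card) * ‖f‖ + (F.card - A.card) * ‖f‖ = ((F.card : ℝ) - A.card) * (2 * ‖f‖) := by ring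
      _ ≤ ε / (2 * ‖f‖ + 1) * F.card * (2 * ‖f‖) := by gcongr
      _ = F.card * (ε / (2 * ‖f‖ + 1) * (2 * ‖f‖)) := by ring
      _ ≤ F.card * ε := by gcongr
  · intro u hu v hv a b ha hb hab ε hε
    obtain ⟨K, δ, hδ, h⟩ := hu ε hε
    obtain ⟨K', δ', hδ', h'⟩ := hv ε hε
    refine ⟨K ∪ K', min δ δ', lt_min hδ hδ', ?_⟩
    intro F hF hFol x
    have key : ∀ (K₁ : Finset G) (δ₁ : ℝ), K₁ ⊆ K ∪ K' → min δ δ' ≤ δ₁ → FolnerInv G K₁ δ₁ F := by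
      intro K₁ δ₁ h1 h2
      unfold FolnerInv at hFol ⊢
      refine le_trans ?_ (hFol.trans ?_)
      · gcongr
      · norm_cast
        apply Set.ncard_le_ncard
        · rintro s ⟨hs, hs'⟩
          exact ⟨hs, fun k hk => hs' k (h1 hk)⟩
        · exact F.finite_toSet.subset fun s hs => hs.1
    have hx := h F hF (key K δ Finset.subset_union_left (min_le_left _ _)) x
    have hx' := h' F hF (key K' δ' Finset.subset_union_right (min_le_right _ _)) x
    have e : favg F (a • u + b • v) x - favg F f x
        = a * (favg F u x - favg F f x) + b * (favg F v x - favg F f x) := by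
      have : favg F (a • u + b • v) x = a * favg F u x + b * favg F v x := by
        simp only [favg_apply, ContinuousMap.add_apply, ContinuousMap.smul_apply, smul_eq_mul,
          Finset.sum_add_distrib, ← Finset.mul_sum]
        ring
      rw [this]
      linear_combination (favg F f x) * hab
    rw [e]
    refine (abs_add_le _ _).trans ?_
    rw [abs_mul, abs_mul, abs_of_nonneg ha, abs_of_nonneg hb]
    nlinarith


theorem ergodic_ae_const [Countable G] {μ : ProbabilityMeasure X} (hμ : μ ∈ EG G X)
    (v : X → ℝ) (hv : AEStronglyMeasurable v (μ : Measure X))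
    (hinv : ∀ g : G, (fun x => v (g • x)) =ᵐ[(μ : Measure X)] v) :
    ∃ c : ℝ, v =ᵐ[(μ : Measure X)] fun _ => c := by
  obtain ⟨hI, hE⟩ := hμ
  have hmeas : ∀ g : G, Measurable (fun x : X => g • x) := fun g =>
    (continuous_const_smul g).measurable
  have hmp : ∀ g : G, MeasurePreserving (fun x : X => g • x) (μ : Measure X) (μ : Measure X) :=
    fun g => ⟨hmeas g, hI g⟩
  set w := hv.mk v with hw
  have hwm : Measurable w := hv.stronglyMeasurable_mk.measurable
  have hvw : v =ᵐ[(μ : Measure X)] w := hv.ae_eq_mk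
  have hwinv : ∀ g : G, (fun x => w (g • x)) =ᵐ[(μ : Measure X)] w := fun g => by
    have h1 : (fun x => v (g • x)) =ᵐ[(μ : Measure X)] fun x => w (g • x) :=
      (hmp g).quasiMeasurePreserving.ae_eq_comp hvw
    exact h1.symm.trans ((hinv g).trans hvw)
  have hall : ∀ᵐ x ∂(μ : Measure X), ∀ g : G, w (g • x) = w x := ae_all_iff.2 hwinv
  suffices h : ∃ c : ℝ, w =ᵐ[(μ : Measure X)] Function.const X c by
    obtain ⟨c, hc⟩ := h
    exact ⟨c, hvw.trans hc⟩
  refine exists_eventuallyEq_const_of_forall_separating MeasurableSet fun U hU => ?_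
  let A : Set X := {x | ∀ g : G, w (g • x) ∈ U}
  have hA : MeasurableSet A := by
    have : A = ⋂ g : G, (fun x => w (g • x)) ⁻¹' U := by ext; simp [A]
    rw [this]
    exact MeasurableSet.iInter fun g => (hwm.comp (hmeas g)) hU
  have hAinv : ∀ g : G, g • A = A := by
    intro g
    ext x
    rw [Set.mem_smul_set_iff_inv_smul_mem]
    simp only [A, mem_ofPred_eq]
    constructor
    · intro h k
      have := h (k * g)
      rwa [smul_smul, mul_assoc, mul_inv_cancel, mul_one] at this
    · intro h k
      rw [smul_smul]
      exact h _
  rcases hE A hA hAinv with h | h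
  · right
    rw [ProbabilityMeasure.null_iff_toMeasure_null] at h
    have h0 : ∀ᵐ x ∂(μ : Measure X), x ∉ A := measure_eq_zero_iff_ae_notMem.1 h
    filter_upwards [h0, hall] with x hx hx' hxU
    exact hx fun g => by rw [hx' g]; exact hxU
  · left
    have h1 : (μ : Measure X) A = 1 := by
      rw [← ProbabilityMeasure.ennreal_coeFn_eq_coeFn_toMeasure, h]; rfl
    have h0 : ∀ᵐ x ∂(μ : Measure X), x ∈ A := (prob_compl_eq_zero_iff hA).2 h1
    filter_upwards [h0] with x hx
    simpa using hx 1

theorem ergodic_mean [Countable G] {μ : ProbabilityMeasure X} (hμ : μ ∈ EG G X)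
    (f : C(X, ℝ)) (ε : ℝ) (hε : 0 < ε) :
    ∃ u ∈ convexHull ℝ (range fun g : G => ktrans g f),
      ∫ x, |u x - ∫ y, f y ∂(μ : Measure X)| ∂(μ : Measure X) < ε := by
  have hmp : ∀ g : G, MeasurePreserving (fun x : X => g • x) (μ : Measure X) (μ : Measure X) :=
    fun g => ⟨(continuous_const_smul g).measurable, hμ.1 g⟩
  let J : C(X, ℝ) →L[ℝ] Lp ℝ 2 (μ : Measure X) := ContinuousMap.toLp 2 (μ : Measure X) ℝ
  let K₀ := convexHull ℝ (range fun g : G => ktrans g f)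
  let K := closure (J '' K₀)
  have hKc : Convex ℝ K := ((convex_convexHull ℝ _).linear_image J.toLinearMap).closure
  have hne : K.Nonempty := ⟨J (ktrans (1 : G) f), subset_closure ⟨_, subset_convexHull ℝ _ ⟨1, rfl⟩, rfl⟩⟩
  obtain ⟨v, hvK, hv⟩ := exists_norm_eq_iInf_of_complete_convex hne isClosed_closure.isComplete hKc 0
  have hv' := (norm_eq_iInf_iff_real_inner_le_zero hKc hvK).1 hv
  let T : G → Lp ℝ 2 (μ : Measure X) → Lp ℝ 2 (μ : Measure X) := fun g =>
    Lp.compMeasurePreserving _ (hmp g)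
  have hTJ : ∀ g u, T g (J u) = J (ktrans g u) := by
    intro g u
    apply Lp.ext
    refine (Lp.coeFn_compMeasurePreserving _ (hmp g)).trans ?_
    have h1 := (hmp g).quasiMeasurePreserving.ae_eq_comp (ContinuousMap.coeFn_toLp (p := 2) (𝕜 := ℝ) (μ : Measure X) u)
    exact h1.trans (ContinuousMap.coeFn_toLp (p := 2) (𝕜 := ℝ) (μ : Measure X) (ktrans g u)).symm
  have hK0 : ∀ g : G, ∀ u ∈ K₀, ktrans g u ∈ K₀ := by
    intro g
    let L : C(X, ℝ) →ₗ[ℝ] C(X, ℝ) :=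
      { toFun := ktrans g, map_add' := fun _ _ => rfl, map_smul' := fun _ _ => rfl }
    have : L '' K₀ ⊆ K₀ := by
      rw [L.image_convexHull]
      apply convexHull_mono
      rintro _ ⟨_, ⟨h, rfl⟩, rfl⟩
      refine ⟨h * g, ?_⟩
      ext x
      change f ((h * g) • x) = f (h • g • x)
      rw [smul_smul]
    intro u hu
    exact this ⟨u, hu, rfl⟩
  have hTK : ∀ g, T g v ∈ K := by
    intro g
    have hc : Continuous (T g) := (Lp.isometry_compMeasurePreserving (hmp g)).continuous
    refine map_mem_closure hc hvK ?_
    rintro _ ⟨u, hu, rfl⟩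
    rw [hTJ]
    exact ⟨_, hK0 g u hu, rfl⟩
  have hTv : ∀ g, T g v = v := by
    intro g
    have h1 := hv' _ (hTK g)
    have h2 : ‖T g v‖ = ‖v‖ := Lp.norm_compMeasurePreserving _ (hmp g)
    rw [zero_sub, inner_neg_left, inner_sub_right, real_inner_self_eq_norm_sq] at h1
    have h3 : ‖T g v - v‖ ^ 2 ≤ 0 := by
      rw [norm_sub_sq_real, real_inner_comm, h2]
      linarith
    have h4 : ‖T g v - v‖ = 0 := by
      have := norm_nonneg (T g v - v)
      nlinarith
    exact sub_eq_zero.1 (norm_eq_zero.1 h4)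
  obtain ⟨c, hc⟩ := ergodic_ae_const hμ v (Lp.aestronglyMeasurable v) (by
    intro g
    have := (Lp.coeFn_compMeasurePreserving v (hmp g)).symm
    refine this.trans ?_
    change (T g v : X → ℝ) =ᵐ[(μ : Measure X)] v
    rw [hTv])
  obtain ⟨_, ⟨u, hu, rfl⟩, hd⟩ := Metric.mem_closure_iff.1 hvK (ε / 2) (half_pos hε)
  have hint : ∫ x, |u x - c| ∂(μ : Measure X) < ε / 2 := by
    have h1 : (fun x => u x - c) =ᵐ[(μ : Measure X)] (J u - v : Lp ℝ 2 (μ : Measure X)) := by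
      filter_upwards [ContinuousMap.coeFn_toLp (p := 2) (𝕜 := ℝ) (μ : Measure X) u, hc,
        Lp.coeFn_sub (J u) v] with x hx1 hx2 hx3
      rw [hx3, Pi.sub_apply, hx2]
      change _ = (ContinuousMap.toLp 2 (μ : Measure X) ℝ u : Lp ℝ 2 (μ : Measure X)) x - c
      rw [hx1]
    have hmeas : AEStronglyMeasurable (fun x => u x - c) (μ : Measure X) :=
      (by fun_prop : Continuous fun x => u x - c).aestronglyMeasurable
    have h2 : ∫ x, |u x - c| ∂(μ : Measure X) = (eLpNorm (fun x => u x - c) 1 (μ : Measure X)).toReal := by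
      rw [eLpNorm_one_eq_lintegral_enorm]
      exact integral_norm_eq_lintegral_enorm hmeas
    have h3 : eLpNorm (fun x => u x - c) 1 (μ : Measure X) ≤ eLpNorm (fun x => u x - c) 2 (μ : Measure X) :=
      eLpNorm_le_eLpNorm_of_exponent_le (by norm_num) hmeas
    have h4 : eLpNorm (fun x => u x - c) 2 (μ : Measure X) = eLpNorm (J u - v : Lp ℝ 2 (μ : Measure X)) 2 (μ : Measure X) :=
      eLpNorm_congr_ae h1
    rw [dist_comm, dist_eq_norm, Lp.norm_def] at hd
    rw [h2]
    refine lt_of_le_of_lt (ENNReal.toReal_mono ?_ (h3.trans h4.le)) hd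
    exact Lp.eLpNorm_ne_top _
  have hui : ∫ x, u x ∂(μ : Measure X) = ∫ x, f x ∂(μ : Measure X) := by
    have : K₀ ⊆ {u | ∫ x, u x ∂(μ : Measure X) = ∫ x, f x ∂(μ : Measure X)} := by
      apply convexHull_min
      · rintro _ ⟨g, rfl⟩
        exact inv_integral hμ.1 g f
      · intro a ha b hb s t hs ht hst
        simp only [mem_ofPred_eq, ContinuousMap.add_apply, ContinuousMap.smul_apply, smul_eq_mul] at *
        rw [integral_add ((integrable_cont μ a).const_mul s) ((integrable_cont μ b).const_mul t),
          integral_const_mul, integral_const_mul, ha, hb, ← add_mul, hst, one_mul]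
    exact this hu
  have hiuc : Integrable (fun x => u x - c) (μ : Measure X) := (integrable_cont μ u).sub (integrable_const c)
  have hcf : |∫ x, f x ∂(μ : Measure X) - c| < ε / 2 := by
    refine lt_of_le_of_lt ?_ hint
    have : ∫ x, f x ∂(μ : Measure X) - c = ∫ x, (u x - c) ∂(μ : Measure X) := by
      rw [integral_sub (integrable_cont μ u) (integrable_const c), hui]; simp
    rw [this]
    exact abs_integral_le_integral_abs
  refine ⟨u, hu, ?_⟩
  set d := ∫ x, f x ∂(μ : Measure X)
  calc ∫ x, |u x - d| ∂(μ : Measure X) ≤ ∫ x, (|u x - c| + |d - c|) ∂(μ : Measure X) := by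
        apply integral_mono
        · exact ((integrable_cont μ u).sub (integrable_const d)).abs
        · exact hiuc.abs.add (integrable_const _)
        · intro x
          have := abs_sub_le (u x) c d
          rwa [abs_sub_comm c d] at this
    _ = ∫ x, |u x - c| ∂(μ : Measure X) + |d - c| := by
        rw [integral_add hiuc.abs (integrable_const _)]; simp
    _ < ε := by linarith


theorem folnerInv_mono {K K' : Finset G} {δ δ' : ℝ} {F : Finset G} (hK : K ⊆ K') (hδ : δ' ≤ δ)
    (h : FolnerInv G K' δ' F) : FolnerInv G K δ F := by
  unfold FolnerInv at h ⊢
  refine le_trans ?_ (h.trans ?_)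
  · gcongr
  · norm_cast
    apply Set.ncard_le_ncard
    · rintro s ⟨hs, hs'⟩
      exact ⟨hs, fun k hk => hs' k (hK hk)⟩
    · exact F.finite_toSet.subset fun s hs => hs.1

theorem uniform_mean [Countable G] (hG : AmenableGroup G) (hcpt : IsCompact (EG G X))
    (f : C(X, ℝ)) (ε : ℝ) (hε : 0 < ε) :
    ∃ v : C(X, ℝ), ∀ μ ∈ EG G X,
      ∫ x, |v x - ∫ y, f y ∂(μ : Measure X)| ∂(μ : Measure X) < ε := by
  classical
  suffices h : ∃ (K : Finset G) (δ : ℝ), 0 < δ ∧ ∀ F : Finset G, F.Nonempty → FolnerInv G K δ F →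
      ∀ μ ∈ EG G X, μ ∈ EG G X →
        ∫ x, |favg F f x - ∫ y, f y ∂(μ : Measure X)| ∂(μ : Measure X) < ε by
    obtain ⟨K, δ, hδ, h⟩ := h
    obtain ⟨F, hF, hFol⟩ := hG K δ hδ
    exact ⟨favg F f, fun μ hμ => h F hF hFol μ hμ hμ⟩
  refine hcpt.induction_on (p := fun s => ∃ (K : Finset G) (δ : ℝ), 0 < δ ∧ ∀ F : Finset G,
    F.Nonempty → FolnerInv G K δ F → ∀ μ ∈ s, μ ∈ EG G X →
        ∫ x, |favg F f x - ∫ y, f y ∂(μ : Measure X)| ∂(μ : Measure X) < ε) ?_ ?_ ?_ ?_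
  · exact ⟨∅, 1, one_pos, fun F _ _ μ hμ => absurd hμ (notMem_empty _)⟩
  · rintro s t hst ⟨K, δ, hδ, h⟩
    exact ⟨K, δ, hδ, fun F hF hFol μ hμ => h F hF hFol μ (hst hμ)⟩
  · rintro s t ⟨K, δ, hδ, h⟩ ⟨K', δ', hδ', h'⟩
    refine ⟨K ∪ K', min δ δ', lt_min hδ hδ', fun F hF hFol μ hμ => ?_⟩
    rcases hμ with hμ | hμ
    · exact h F hF (folnerInv_mono Finset.subset_union_left (min_le_left _ _) hFol) μ hμ
    · exact h' F hF (folnerInv_mono Finset.subset_union_right (min_le_right _ _) hFol) μ hμ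
  · intro μ₀ hμ₀
    have hε4 : 0 < ε / 4 := by positivity
    obtain ⟨u, hu, hu'⟩ := ergodic_mean hμ₀ f (ε / 4) hε4
    obtain ⟨K, δ, hδ, hK⟩ := folner_near f u hu (ε / 4) hε4
    set c₀ := ∫ y, f y ∂(μ₀ : Measure X) with hc₀
    let w : C(X, ℝ) := ⟨fun x => |u x - c₀|, by fun_prop⟩
    have ev1 : ∀ᶠ μ : ProbabilityMeasure X in 𝓝 μ₀, ∫ x, w x ∂(μ : Measure X) < ε / 4 :=
      (ProbabilityMeasure.continuous_integral_continuousMap w).continuousAt.eventually_lt_const hu'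
    have ev2 : ∀ᶠ μ : ProbabilityMeasure X in 𝓝 μ₀, |∫ x, f x ∂(μ : Measure X) - c₀| < ε / 4 := by
      have h1 := (ProbabilityMeasure.continuous_integral_continuousMap (X := X) f).tendsto μ₀
      have h2 := Metric.tendsto_nhds.1 h1 (ε / 4) hε4
      simpa [Real.dist_eq] using h2
    refine ⟨_, mem_nhdsWithin_of_mem_nhds (ev1.and ev2), K, δ, hδ, ?_⟩
    rintro F hF hFol μ ⟨h1, h2⟩ hμ
    set d := ∫ x, f x ∂(μ : Measure X) with hd
    have h3 := favg_dist_le hμ.1 c₀ u F hF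
    have hi : Integrable (fun x => |favg F u x - c₀|) (μ : Measure X) :=
      ((integrable_cont μ _).sub (integrable_const _)).abs
    calc ∫ x, |favg F f x - d| ∂(μ : Measure X)
        ≤ ∫ x, (|favg F u x - c₀| + (ε / 4 + |d - c₀|)) ∂(μ : Measure X) := by
          apply integral_mono
          · exact ((integrable_cont μ _).sub (integrable_const _)).abs
          · exact hi.add (integrable_const _)
          · intro x
            have a1 := hK F hF hFol x
            have a2 := abs_sub_le (favg F f x) (favg F u x) d
            have a3 := abs_sub_le (favg F u x) c₀ d
            rw [abs_sub_comm (favg F f x) (favg F u x)] at a2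
            rw [abs_sub_comm c₀] at a3
            change |favg F f x - d| ≤ |favg F u x - c₀| + (ε / 4 + |d - c₀|)
            linarith
      _ = ∫ x, |favg F u x - c₀| ∂(μ : Measure X) + (ε / 4 + |d - c₀|) := by
          rw [integral_add hi (integrable_const _)]; simp
      _ < ε := by
          have : ∫ x, |u x - c₀| ∂(μ : Measure X) < ε / 4 := h1
          linarith

theorem prob_ext {μ ν : ProbabilityMeasure X}
    (h : ∀ f : C(X, ℝ), ∫ x, f x ∂(μ : Measure X) = ∫ x, f x ∂(ν : Measure X)) : μ = ν := by
  apply ProbabilityMeasure.toMeasure_injective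
  exact ext_of_forall_integral_eq_of_IsFiniteMeasure fun f => h f.toContinuousMap

theorem integral_mul_est (μ : ProbabilityMeasure X) (f g : C(X, ℝ)) (a b : ℝ) :
    ∫ x, |f x * g x - a * b| ∂(μ : Measure X) ≤
      ‖g‖ * ∫ x, |f x - a| ∂(μ : Measure X) + |a| * ∫ x, |g x - b| ∂(μ : Measure X) := by
  have i1 : Integrable (fun x => |f x - a|) (μ : Measure X) :=
      ((integrable_cont μ _).sub (integrable_const _)).abs
  have i2 : Integrable (fun x => |g x - b|) (μ : Measure X) :=
      ((integrable_cont μ _).sub (integrable_const _)).abs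
  rw [← integral_const_mul, ← integral_const_mul, ← integral_add (i1.const_mul _) (i2.const_mul _)]
  apply integral_mono
  · exact ((integrable_cont μ (f * g)).sub (integrable_const _)).abs
  · exact (i1.const_mul _).add (i2.const_mul _)
  · intro x
    have hb : |g x| ≤ ‖g‖ := g.norm_coe_le_norm x
    have e : f x * g x - a * b = g x * (f x - a) + a * (g x - b) := by ring
    change |f x * g x - a * b| ≤ ‖g‖ * |f x - a| + |a| * |g x - b|
    rw [e]
    refine (abs_add_le _ _).trans ?_
    rw [abs_mul, abs_mul]
    gcongr

theorem integral_add_est (μ : ProbabilityMeasure X) (f g : C(X, ℝ)) (a b : ℝ) :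
    ∫ x, |f x + g x - (a + b)| ∂(μ : Measure X) ≤
      ∫ x, |f x - a| ∂(μ : Measure X) + ∫ x, |g x - b| ∂(μ : Measure X) := by
  have i1 : Integrable (fun x => |f x - a|) (μ : Measure X) :=
      ((integrable_cont μ _).sub (integrable_const _)).abs
  have i2 : Integrable (fun x => |g x - b|) (μ : Measure X) :=
      ((integrable_cont μ _).sub (integrable_const _)).abs
  rw [← integral_add i1 i2]
  apply integral_mono
  · exact ((integrable_cont μ (f + g)).sub (integrable_const _)).abs
  · exact i1.add i2
  · intro x
    have e : f x + g x - (a + b) = (f x - a) + (g x - b) := by ring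
    change |f x + g x - (a + b)| ≤ |f x - a| + |g x - b|
    rw [e]
    exact abs_add_le _ _

/-- The algebra of functions on the ergodic measures realised approximately by functions on `X`. -/
theorem approx_all [Countable G] (hG : AmenableGroup G) (hcpt : IsCompact (EG G X))
    (h : C(EG G X, ℝ)) (ε : ℝ) (hε : 0 < ε) :
    ∃ v : C(X, ℝ), ∀ μ : EG G X,
      ∫ x, |v x - h μ| ∂((μ : ProbabilityMeasure X) : Measure X) < ε := by
  have : CompactSpace (EG G X) := isCompact_iff_compactSpace.1 hcpt
  let S : Subalgebra ℝ C(EG G X, ℝ) :=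
    { carrier := {h | ∀ ε > 0, ∃ v : C(X, ℝ), ∀ μ : EG G X,
        ∫ x, |v x - h μ| ∂((μ : ProbabilityMeasure X) : Measure X) < ε}
      mul_mem' := by
        intro a b ha hb ε hε
        obtain ⟨g, hg⟩ := hb (ε / (2 * (‖a‖ + 1))) (by positivity)
        obtain ⟨f, hf⟩ := ha (ε / (2 * (‖g‖ + 1))) (by positivity)
        refine ⟨f * g, fun μ => ?_⟩
        refine lt_of_le_of_lt (integral_mul_est (μ : ProbabilityMeasure X) f g (a μ) (b μ)) ?_
        have h1 := hf μ
        have h2 := hg μ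
        have h3 : |a μ| ≤ ‖a‖ := a.norm_coe_le_norm μ
        rw [lt_div_iff₀ (by positivity)] at h1 h2
        have n1 : 0 ≤ ∫ x, |f x - a μ| ∂((μ : ProbabilityMeasure X) : Measure X) :=
          integral_nonneg fun _ => abs_nonneg _
        have n2 : 0 ≤ ∫ x, |g x - b μ| ∂((μ : ProbabilityMeasure X) : Measure X) :=
          integral_nonneg fun _ => abs_nonneg _
        nlinarith [mul_le_mul_of_nonneg_right h3 n2]
      add_mem' := by
        intro a b ha hb ε hε
        obtain ⟨f, hf⟩ := ha (ε / 2) (half_pos hε)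
        obtain ⟨g, hg⟩ := hb (ε / 2) (half_pos hε)
        refine ⟨f + g, fun μ => ?_⟩
        refine lt_of_le_of_lt (integral_add_est (μ : ProbabilityMeasure X) f g (a μ) (b μ)) ?_
        linarith [hf μ, hg μ]
      algebraMap_mem' := by
        intro r ε hε
        refine ⟨algebraMap ℝ C(X, ℝ) r, fun μ => ?_⟩
        simpa using hε }
  have hsep : S.SeparatesPoints := by
    intro μ ν hne
    by_contra hcon
    apply hne
    apply Subtype.ext
    apply prob_ext
    intro f
    by_contra hf
    apply hcon
    let φ : C(EG G X, ℝ) := ⟨fun μ => ∫ x, f x ∂((μ : ProbabilityMeasure X) : Measure X),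
      (ProbabilityMeasure.continuous_integral_continuousMap f).comp continuous_subtype_val⟩
    refine ⟨φ, ⟨φ, ?_, rfl⟩, hf⟩
    intro ε hε
    obtain ⟨v, hv⟩ := uniform_mean hG hcpt f ε hε
    exact ⟨v, fun μ => hv μ μ.2⟩
  have htop := ContinuousMap.subalgebra_topologicalClosure_eq_top_of_separatesPoints S hsep
  have hmem : h ∈ closure (S : Set C(EG G X, ℝ)) := by
    have : h ∈ S.topologicalClosure := by rw [htop]; trivial
    exact this
  obtain ⟨k, hkS, hk⟩ := Metric.mem_closure_iff.1 hmem (ε / 2) (half_pos hε)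
  obtain ⟨v, hv⟩ := hkS (ε / 2) (half_pos hε)
  refine ⟨v, fun μ => ?_⟩
  have i1 : Integrable (fun x => |v x - k μ|) ((μ : ProbabilityMeasure X) : Measure X) :=
      ((integrable_cont _ _).sub (integrable_const _)).abs
  have hd : |k μ - h μ| < ε / 2 := by
    have := lt_of_le_of_lt (ContinuousMap.dist_apply_le_dist (f := h) (g := k) μ) hk
    rwa [Real.dist_eq, abs_sub_comm] at this
  calc ∫ x, |v x - h μ| ∂((μ : ProbabilityMeasure X) : Measure X)
      ≤ ∫ x, (|v x - k μ| + |k μ - h μ|) ∂((μ : ProbabilityMeasure X) : Measure X) := by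
        apply integral_mono
        · exact ((integrable_cont _ _).sub (integrable_const _)).abs
        · exact i1.add (integrable_const _)
        · intro x
          exact abs_sub_le _ _ _
    _ = ∫ x, |v x - k μ| ∂((μ : ProbabilityMeasure X) : Measure X) + |k μ - h μ| := by
        rw [integral_add i1 (integrable_const _)]; simp
    _ < ε := by linarith [hv μ]

/-- Locally constant choice of a level with small measure. -/
theorem radius_exists (hcpt : IsCompact (EG G X)) (hzd : IsTotallyDisconnected (EG G X))
    (f : C(X, ℝ)) (ε : ENNReal) (hε : 0 < ε) :
    ∃ (r : C(EG G X, ℝ)) (η : ℝ), 0 < η ∧ η ≤ 1 / 4 ∧ ∀ μ : EG G X,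
      2 * η ≤ r μ ∧ r μ ≤ 1 - 2 * η ∧
        ((μ : ProbabilityMeasure X) : Measure X) {x | |f x - r μ| ≤ 2 * η} < ε := by
  classical
  have : CompactSpace (EG G X) := isCompact_iff_compactSpace.1 hcpt
  have : TotallyDisconnectedSpace (EG G X) := totallyDisconnectedSpace_subtype_iff.2 hzd
  let good : ℝ → ℝ → EG G X → Prop := fun r η μ => 2 * η ≤ r ∧ r ≤ 1 - 2 * η ∧
        ((μ : ProbabilityMeasure X) : Measure X) {x | |f x - r| ≤ 2 * η} < ε
  have gmono : ∀ r η η' μ, η' ≤ η → good r η μ → good r η' μ := by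
    rintro r η η' μ h ⟨h1, h2, h3⟩
    refine ⟨by linarith, by linarith, lt_of_le_of_lt (measure_mono ?_) h3⟩
    intro x (hx : |f x - r| ≤ 2 * η')
    change |f x - r| ≤ 2 * η
    linarith
  suffices H : ∃ C : Set (EG G X), IsClopen C ∧ univ ⊆ C ∧ ∃ (r : C(EG G X, ℝ)) (η : ℝ),
      0 < η ∧ η ≤ 1 / 4 ∧ ∀ μ ∈ C, good (r μ) η μ by
    obtain ⟨C, _, hC, r, η, h0, h1, h2⟩ := H
    exact ⟨r, η, h0, h1, fun μ => h2 μ (hC trivial)⟩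
  refine isCompact_univ.induction_on (p := fun s => ∃ C : Set (EG G X), IsClopen C ∧ s ⊆ C ∧
      ∃ (r : C(EG G X, ℝ)) (η : ℝ), 0 < η ∧ η ≤ 1 / 4 ∧ ∀ μ ∈ C, good (r μ) η μ) ?_ ?_ ?_ ?_
  · exact ⟨∅, isClopen_empty, subset_rfl, 0, 1 / 4, by norm_num, le_rfl,
      fun μ hμ => absurd hμ (notMem_empty _)⟩
  · rintro s t hst ⟨C, h1, h2, h3⟩
    exact ⟨C, h1, hst.trans h2, h3⟩
  · rintro s t ⟨C, hC, hs, r, η, h0, h4, h⟩ ⟨C', hC', hs', r', η', h0', h4', h'⟩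
    refine ⟨C ∪ C', hC.union hC', union_subset_union hs hs', ⟨C.piecewise r r', ?_⟩, min η η',
      lt_min h0 h0', (min_le_left _ _).trans h4, ?_⟩
    · apply Continuous.piecewise _ r.continuous r'.continuous
      intro a ha
      rw [hC.frontier_eq] at ha
      exact absurd ha (notMem_empty _)
    · intro μ hμ
      change good (C.piecewise r r' μ) _ μ
      by_cases hm : μ ∈ C
      · rw [Set.piecewise_eq_of_mem _ _ _ hm]
        exact gmono _ _ _ _ (min_le_left _ _) (h μ hm)
      · rw [Set.piecewise_eq_of_notMem _ _ _ hm]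
        exact gmono _ _ _ _ (min_le_right _ _) (h' μ (hμ.resolve_left hm))
  · intro μ₀ _
    let m : Measure X := ((μ₀ : ProbabilityMeasure X) : Measure X)
    have hcount : {t | 0 < m {a | f a = t}}.Countable :=
      Measure.countable_meas_level_set_pos f.continuous.measurable
    obtain ⟨t, ht01, ht⟩ := (hcount.dense_compl ℝ).exists_mem_open (isOpen_Ioo (a := (0 : ℝ)) (b := 1))
      ⟨1 / 2, by norm_num, by norm_num⟩
    have hmt : m {a | f a = t} = 0 := by
      by_contra hne
      exact ht01 (pos_iff_ne_zero.2 hne)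
    let n : Measure ℝ := m.map f
    have : IsProbabilityMeasure n := Measure.isProbabilityMeasure_map f.continuous.aemeasurable
    have hlim := tendsto_measure_cthickening_of_isClosed (μ := n) (s := {t})
      ⟨1, one_pos, measure_ne_top _ _⟩ isClosed_singleton
    have hn : n {t} = 0 := by
      rw [Measure.map_apply f.continuous.measurable (measurableSet_singleton t)]
      exact hmt
    rw [hn] at hlim
    have hev := hlim.eventually (gt_mem_nhds hε)
    obtain ⟨ρ, hρ, hball⟩ := Metric.eventually_nhds_iff.1 hev
    obtain ⟨η, hη, hη'⟩ : ∃ η : ℝ, 0 < η ∧ η < min (min (ρ / 4) (1 / 4)) (min (t / 2) ((1 - t) / 2)) :=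
      exists_between (lt_min (lt_min (by positivity) (by norm_num))
        (lt_min (by linarith [ht.1]) (by linarith [ht.2])))
    simp only [lt_min_iff] at hη'
    obtain ⟨⟨e1, e2⟩, e3, e4⟩ := hη'
    have hm : m {x | |f x - t| ≤ 2 * η} < ε := by
      have h1 : n (Metric.cthickening (2 * η) {t}) < ε := by
        apply hball
        rw [Real.dist_eq, sub_zero, abs_of_pos (by positivity)]
        linarith
      rw [Metric.cthickening_singleton _ (by positivity),
        Measure.map_apply f.continuous.measurable Metric.isClosed_closedBall.measurableSet] at h1
      convert h1 using 2
      ext x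
      simp [Real.dist_eq]
    have hcl : IsClosed {x | |f x - t| ≤ 2 * η} := isClosed_le (by fun_prop) continuous_const
    have hopen := eventually_closed_lt hcl (μ₀ : ProbabilityMeasure X) hm
    have hopen' : ∀ᶠ μ : EG G X in 𝓝 μ₀,
        ((μ : ProbabilityMeasure X) : Measure X) {x | |f x - t| ≤ 2 * η} < ε :=
      continuous_subtype_val.continuousAt.eventually hopen
    obtain ⟨O, hOsub, hO, hμO⟩ := _root_.mem_nhds_iff.1 hopen'
    obtain ⟨C, hC, hμC, hCO⟩ := compact_exists_isClopen_in_isOpen hO hμO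
    refine ⟨C, mem_nhdsWithin_of_mem_nhds (hC.isOpen.mem_nhds hμC), C, hC, subset_rfl,
      ContinuousMap.const _ t, η, hη, by linarith, fun μ hμ => ?_⟩
    exact ⟨by change 2 * η ≤ t; linarith, by change t ≤ _; linarith, hOsub (hCO hμ)⟩


theorem step_exists [Countable G] (hG : AmenableGroup G) (hcpt : IsCompact (EG G X))
    (hzd : IsTotallyDisconnected (EG G X)) (F U : Set X) (hF : IsClosed F) (hU : IsOpen U)
    (hFU : F ⊆ U) (ε : ℝ) (hε : 0 < ε) :
    ∃ F' U' : Set X, IsClosed F' ∧ IsOpen U' ∧ F' ⊆ U' ∧ F ⊆ interior F' ∧ closure U' ⊆ U ∧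
      ∀ μ ∈ EG G X, (μ : Measure X) (closure U' \ interior F') ≤ ENNReal.ofReal ε := by
  obtain ⟨f, hf0, hf1, -⟩ := exists_continuous_zero_one_of_isClosed hF hU.isClosed_compl
    (disjoint_compl_right_iff_subset.2 hFU)
  obtain ⟨r, η, hη, hη4, hr⟩ := radius_exists hcpt hzd f (ENNReal.ofReal (ε / 2))
    (ENNReal.ofReal_pos.2 (half_pos hε))
  obtain ⟨v, hv⟩ := approx_all hG hcpt r (η * (ε / 2)) (by positivity)
  let R : X → ℝ := fun x => max (2 * η) (min (v x) (1 - 2 * η))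
  have hRc : Continuous R := by fun_prop
  have hR1 : ∀ x, 2 * η ≤ R x := fun x => le_max_left _ _
  have hR2 : ∀ x, R x ≤ 1 - 2 * η := fun x => max_le (by linarith) (min_le_right _ _)
  have hsub : closure {x | f x < R x + η} ⊆ {x | f x ≤ R x + η} :=
    closure_minimal (fun x (hx : f x < R x + η) => hx.le)
      (isClosed_le f.continuous (hRc.add continuous_const))
  have hint : {x | f x < R x - η} ⊆ interior {x | f x ≤ R x - η} :=
    interior_maximal (fun x (hx : f x < R x - η) => hx.le)
      (isOpen_lt f.continuous (hRc.sub continuous_const))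
  refine ⟨{x | f x ≤ R x - η}, {x | f x < R x + η},
    isClosed_le f.continuous (hRc.sub continuous_const),
    isOpen_lt f.continuous (hRc.add continuous_const), ?_, ?_, ?_, ?_⟩
  · intro x (hx : f x ≤ R x - η)
    change f x < R x + η
    linarith
  · intro x hx
    apply hint
    change f x < R x - η
    rw [hf0 hx]
    have := hR1 x
    simp only [Pi.zero_apply]
    linarith
  · intro x hx
    by_contra hxU
    have h1 : f x ≤ R x + η := hsub hx
    rw [hf1 hxU] at h1
    have := hR2 x
    simp only [Pi.one_apply] at h1
    linarith
  · intro μ hμ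
    obtain ⟨r1, r2, r3⟩ := hr ⟨μ, hμ⟩
    have hv' := hv ⟨μ, hμ⟩
    set ρ := r ⟨μ, hμ⟩
    have hss : closure {x | f x < R x + η} \ interior {x | f x ≤ R x - η} ⊆
        {x | |f x - ρ| ≤ 2 * η} ∪ {x | η ≤ |v x - ρ|} := by
      rintro x ⟨hx1, hx2⟩
      have a1 : f x ≤ R x + η := hsub hx1
      have a2 : R x - η ≤ f x := by
        by_contra hcon
        exact hx2 (hint (not_le.1 hcon))
      by_cases hx : η ≤ |v x - ρ|
      · exact Or.inr hx
      · left
        change |f x - ρ| ≤ 2 * η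
        rw [not_le, abs_lt] at hx
        have b1 : R x ≤ ρ + η := max_le (by linarith) ((min_le_left _ _).trans (by linarith))
        have b2 : ρ - η ≤ R x := le_trans (le_min (by linarith) (by linarith)) (le_max_right _ _)
        rw [abs_le]
        constructor <;> linarith
    have hmk : (μ : Measure X) {x | η ≤ |v x - ρ|} ≤ ENNReal.ofReal (ε / 2) := by
      have h1 := mul_meas_ge_le_integral_of_nonneg (μ := (μ : Measure X)) (f := fun x => |v x - ρ|)
        (.of_forall fun _ => abs_nonneg _) ((integrable_cont μ v).sub (integrable_const ρ)).abs η
      have h2 : (μ : Measure X).real {x | η ≤ |v x - ρ|} ≤ ε / 2 := by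
        have : η * (μ : Measure X).real {x | η ≤ |v x - ρ|} < η * (ε / 2) := lt_of_le_of_lt h1 hv'
        exact (lt_of_mul_lt_mul_left this hη.le).le
      exact (ENNReal.le_ofReal_iff_toReal_le (measure_ne_top _ _) (by positivity)).2 h2
    calc (μ : Measure X) (closure {x | f x < R x + η} \ interior {x | f x ≤ R x - η})
        ≤ (μ : Measure X) ({x | |f x - ρ| ≤ 2 * η} ∪ {x | η ≤ |v x - ρ|}) := measure_mono hss
      _ ≤ (μ : Measure X) {x | |f x - ρ| ≤ 2 * η} + (μ : Measure X) {x | η ≤ |v x - ρ|} :=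
          measure_union_le _ _
      _ ≤ ENNReal.ofReal (ε / 2) + ENNReal.ofReal (ε / 2) := add_le_add r3.le hmk
      _ = ENNReal.ofReal ε := by
          rw [← ENNReal.ofReal_add (by positivity) (by positivity), add_halves]

theorem null_boundary [Countable G] (hG : AmenableGroup G) (hcpt : IsCompact (EG G X))
    (hzd : IsTotallyDisconnected (EG G X)) (x : X) (U : Set X) (hU : IsOpen U) (hx : x ∈ U) :
    ∃ V : Set X, IsOpen V ∧ x ∈ V ∧ V ⊆ U ∧ ∀ μ ∈ EG G X, (μ : Measure X) (frontier V) = 0 := by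
  let P := {p : Set X × Set X // IsClosed p.1 ∧ IsOpen p.2 ∧ p.1 ⊆ p.2}
  have hstep : ∀ (n : ℕ) (p : P), ∃ q : P, p.1.1 ⊆ interior q.1.1 ∧ closure q.1.2 ⊆ p.1.2 ∧
      ∀ μ ∈ EG G X, (μ : Measure X) (closure q.1.2 \ interior q.1.1)
        ≤ ENNReal.ofReal (1 / ((n : ℝ) + 1)) := by
    rintro n ⟨⟨F, U⟩, hF, hU, hFU⟩
    obtain ⟨F', U', h1, h2, h3, h4, h5, h6⟩ := step_exists hG hcpt hzd F U hF hU hFU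
      (1 / ((n : ℝ) + 1)) (by positivity)
    exact ⟨⟨(F', U'), h1, h2, h3⟩, h4, h5, h6⟩
  choose nxt hn1 hn2 hn3 using hstep
  let p₀ : P := ⟨({x}, U), isClosed_singleton, hU, singleton_subset_iff.2 hx⟩
  let s : ℕ → P := fun n => Nat.rec p₀ nxt n
  have hs : ∀ n, s (n + 1) = nxt n (s n) := fun n => rfl
  have i1 : ∀ n, (s n).1.1 ⊆ interior (s (n + 1)).1.1 := fun n => hn1 n (s n)
  have i2 : ∀ n, closure (s (n + 1)).1.2 ⊆ (s n).1.2 := fun n => hn2 n (s n)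
  have mF : Monotone fun n => (s n).1.1 :=
    monotone_nat_of_le_succ fun n => (i1 n).trans interior_subset
  have mU : Antitone fun n => (s n).1.2 :=
    antitone_nat_of_succ_le fun n => subset_closure.trans (i2 n)
  let V : Set X := ⋃ n, interior (s n).1.1
  have hVF : ∀ n, (s n).1.1 ⊆ V := fun n => (i1 n).trans (subset_iUnion (fun n => interior (s n).1.1) (n + 1))
  have hVU : ∀ n, V ⊆ (s n).1.2 := by
    intro n
    apply iUnion_subset
    intro m
    calc interior (s m).1.1 ⊆ (s m).1.1 := interior_subset
      _ ⊆ (s (max m n)).1.1 := mF (le_max_left _ _)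
      _ ⊆ (s (max m n)).1.2 := (s (max m n)).2.2.2
      _ ⊆ (s n).1.2 := mU (le_max_right _ _)
  have hVo : IsOpen V := isOpen_iUnion fun n => isOpen_interior
  refine ⟨V, hVo, hVF 0 (mem_singleton x), hVU 0, fun μ hμ => ?_⟩
  have hle : ∀ n : ℕ, (μ : Measure X) (frontier V) ≤ ENNReal.ofReal (1 / ((n : ℝ) + 1)) := by
    intro n
    refine (measure_mono ?_).trans (hn3 n (s n) μ hμ)
    rw [← hs, hVo.frontier_eq]
    exact diff_subset_diff (closure_mono (hVU (n + 1))) (subset_iUnion (fun n => interior (s n).1.1) (n + 1))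
  have hlim : Tendsto (fun n : ℕ => ENNReal.ofReal (1 / ((n : ℝ) + 1))) atTop (𝓝 0) := by
    have := ENNReal.tendsto_ofReal (tendsto_one_div_add_atTop_nhds_zero_nat (𝕜 := ℝ))
    simpa using this
  exact le_antisymm (ge_of_tendsto' hlim hle) bot_le

theorem MG_compact : IsCompact (MG G X) := by
  apply IsClosed.isCompact
  have : MG G X = ⋂ (g : G) (f : C(X, ℝ)), {μ : ProbabilityMeasure X |
      ∫ x, ktrans g f x ∂(μ : Measure X) = ∫ x, f x ∂(μ : Measure X)} := by
    ext μ
    simp only [mem_iInter]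
    constructor
    · intro h g f
      exact inv_integral h g f
    · intro h g
      have hm : Measurable fun x : X => g • x := (continuous_const_smul g).measurable
      have : IsProbabilityMeasure (Measure.map (fun x => g • x) (μ : Measure X)) :=
        Measure.isProbabilityMeasure_map hm.aemeasurable
      refine ext_of_forall_integral_eq_of_IsFiniteMeasure fun f => ?_
      rw [integral_map hm.aemeasurable f.continuous.aestronglyMeasurable]
      exact h g f.toContinuousMap
  rw [this]
  exact isClosed_iInter fun g => isClosed_iInter fun f =>
    isClosed_eq (ProbabilityMeasure.continuous_integral_continuousMap _)
      (ProbabilityMeasure.continuous_integral_continuousMap _)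

theorem cond_invariant {μ : ProbabilityMeasure X} (hμ : InvariantMeasure G X μ) {A : Set X}
    (hA : MeasurableSet A) (hinv : ∀ g : G, g • A = A) (h0 : (μ : Measure X) A ≠ 0) :
    ∃ ν ∈ MG G X, (ν : Measure X) A = 1 ∧ ∀ f : C(X, ℝ),
      (μ : Measure X).real A * ∫ x, f x ∂(ν : Measure X) = ∫ x in A, f x ∂(μ : Measure X) := by
  have hp := ProbabilityTheory.cond_isProbabilityMeasure (μ := (μ : Measure X)) h0
  refine ⟨⟨_, hp⟩, ?_, ?_, ?_⟩
  · intro g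
    have hmp : MeasurePreserving (fun x : X => g • x) (μ : Measure X) (μ : Measure X) :=
      ⟨(continuous_const_smul g).measurable, hμ g⟩
    have h1 := (hmp.restrict_preimage hA).map_eq
    have h2 : (fun x : X => g • x) ⁻¹' A = A := by
      rw [Set.preimage_smul, hinv]
    rw [h2] at h1
    change Measure.map (fun x : X => g • x) (ProbabilityTheory.cond (μ : Measure X) A) = ProbabilityTheory.cond (μ : Measure X) A
    rw [ProbabilityTheory.cond, Measure.map_smul, h1]
  · exact ProbabilityTheory.cond_apply_self h0 (measure_ne_top _ _)
  · intro f
    change _ * ∫ x, f x ∂(ProbabilityTheory.cond (μ : Measure X) A) = _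
    rw [ProbabilityTheory.cond, integral_smul_measure, smul_eq_mul, ENNReal.toReal_inv, ← mul_assoc,
      Measure.real, mul_inv_cancel₀, one_mul]
    exact (ENNReal.toReal_pos h0 (measure_ne_top _ _)).ne'

theorem exists_ergodic_max (h : C(X, ℝ)) (ν : ProbabilityMeasure X) (hν : ν ∈ MG G X) :
    ∃ μ ∈ EG G X, ∫ x, h x ∂(ν : Measure X) ≤ ∫ x, h x ∂(μ : Measure X) := by
  let Φ : ProbabilityMeasure X → (C(X, ℝ) → ℝ) := fun μ f => ∫ x, f x ∂(μ : Measure X)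
  have hΦ : Continuous Φ := continuous_pi fun f =>
    ProbabilityMeasure.continuous_integral_continuousMap f
  have hinj : Function.Injective Φ := fun a b hab => prob_ext fun f => congrFun hab f
  have hcont : Continuous fun μ : ProbabilityMeasure X => ∫ x, h x ∂(μ : Measure X) :=
    ProbabilityMeasure.continuous_integral_continuousMap h
  obtain ⟨μ₀, hμ₀, hmax⟩ := (MG_compact (G := G) (X := X)).exists_isMaxOn ⟨ν, hν⟩ hcont.continuousOn
  let T : Set (ProbabilityMeasure X) := MG G X ∩ {μ | ∫ x, h x ∂(μ : Measure X) = ∫ x, h x ∂(μ₀ : Measure X)}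
  have hT : IsCompact T := MG_compact.inter_right (isClosed_eq hcont continuous_const)
  obtain ⟨φ, hφ⟩ := (hT.image hΦ).extremePoints_nonempty ⟨Φ μ₀, μ₀, ⟨hμ₀, rfl⟩, rfl⟩
  obtain ⟨⟨μ, ⟨hμ, hμmax⟩, rfl⟩, hext⟩ := mem_extremePoints.1 hφ
  have hμmax' : ∫ x, h x ∂(μ : Measure X) = ∫ x, h x ∂(μ₀ : Measure X) := hμmax
  refine ⟨μ, ⟨hμ, ?_⟩, by rw [hμmax']; exact hmax hν⟩
  intro A hA hinv
  by_contra hcon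
  push Not at hcon
  have h0 : (μ : Measure X) A ≠ 0 := fun h0 => hcon.1 ((μ.null_iff_toMeasure_null A).2 h0)
  have h1 : (μ : Measure X) A ≠ 1 := by
    intro h1
    apply hcon.2
    rw [← ProbabilityMeasure.ennreal_coeFn_eq_coeFn_toMeasure] at h1
    exact_mod_cast h1
  have h2 : (μ : Measure X) Aᶜ ≠ 0 := fun h2 => h1 ((prob_compl_eq_zero_iff hA).1 h2)
  have hinv' : ∀ g : G, g • Aᶜ = Aᶜ := fun g => by rw [Set.smul_set_compl, hinv]
  obtain ⟨μ₁, hμ₁, h11, hi1⟩ := cond_invariant hμ hA hinv h0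
  obtain ⟨μ₂, hμ₂, -, hi2⟩ := cond_invariant hμ hA.compl hinv' h2
  have ha : 0 < (μ : Measure X).real A := ENNReal.toReal_pos h0 (measure_ne_top _ _)
  have hb : 0 < (μ : Measure X).real Aᶜ := ENNReal.toReal_pos h2 (measure_ne_top _ _)
  have hab : (μ : Measure X).real A + (μ : Measure X).real Aᶜ = 1 := by
    rw [measureReal_add_measureReal_compl hA]; simp
  have hsum : ∀ f : C(X, ℝ), (μ : Measure X).real A * ∫ x, f x ∂(μ₁ : Measure X)
      + (μ : Measure X).real Aᶜ * ∫ x, f x ∂(μ₂ : Measure X) = ∫ x, f x ∂(μ : Measure X) := by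
    intro f
    rw [hi1, hi2, integral_add_compl hA (integrable_cont μ f)]
  have m1 : ∫ x, h x ∂(μ₁ : Measure X) ≤ ∫ x, h x ∂(μ₀ : Measure X) := hmax hμ₁
  have m2 : ∫ x, h x ∂(μ₂ : Measure X) ≤ ∫ x, h x ∂(μ₀ : Measure X) := hmax hμ₂
  have hs := hsum h
  rw [hμmax'] at hs
  have t1 : ∫ x, h x ∂(μ₁ : Measure X) = ∫ x, h x ∂(μ₀ : Measure X) := by
    by_contra hne
    have := lt_of_le_of_ne m1 hne
    have k1 := mul_lt_mul_of_pos_left this ha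
    have k2 := mul_le_mul_of_nonneg_left m2 hb.le
    have k3 : (μ : Measure X).real A * (∫ x, h x ∂(μ₀ : Measure X))
        + (μ : Measure X).real Aᶜ * (∫ x, h x ∂(μ₀ : Measure X)) = ∫ x, h x ∂(μ₀ : Measure X) := by
      rw [← add_mul, hab, one_mul]
    linarith
  have t2 : ∫ x, h x ∂(μ₂ : Measure X) = ∫ x, h x ∂(μ₀ : Measure X) := by
    by_contra hne
    have := lt_of_le_of_ne m2 hne
    have k1 := mul_le_mul_of_nonneg_left m1 ha.le
    have k2 := mul_lt_mul_of_pos_left this hb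
    have k3 : (μ : Measure X).real A * (∫ x, h x ∂(μ₀ : Measure X))
        + (μ : Measure X).real Aᶜ * (∫ x, h x ∂(μ₀ : Measure X)) = ∫ x, h x ∂(μ₀ : Measure X) := by
      rw [← add_mul, hab, one_mul]
    linarith
  have := hext (Φ μ₁) ⟨μ₁, ⟨hμ₁, t1⟩, rfl⟩ (Φ μ₂) ⟨μ₂, ⟨hμ₂, t2⟩, rfl⟩
    ⟨_, _, ha, hb, hab, funext fun f => hsum f⟩
  have heq := hinj this.1
  rw [heq] at h11
  exact h1 h11

theorem null_of_ergodic_null (hcpt : IsCompact (EG G X)) (C : Set X) (hC : IsClosed C)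
    (h0 : ∀ μ ∈ EG G X, (μ : Measure X) C = 0) (ν : ProbabilityMeasure X) (hν : ν ∈ MG G X) :
    (ν : Measure X) C = 0 := by
  by_contra hne
  have hpos : 0 < (ν : Measure X) C := pos_iff_ne_zero.2 hne
  have H : ∃ δ : ℝ, 0 < δ ∧ ∀ μ ∈ EG G X, μ ∈ EG G X →
      (μ : Measure X) (Metric.cthickening δ C) < (ν : Measure X) C := by
    refine hcpt.induction_on (p := fun s => ∃ δ : ℝ, 0 < δ ∧ ∀ μ ∈ s, μ ∈ EG G X →
      (μ : Measure X) (Metric.cthickening δ C) < (ν : Measure X) C) ?_ ?_ ?_ ?_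
    · exact ⟨1, one_pos, fun μ hμ => absurd hμ (notMem_empty _)⟩
    · rintro s t hst ⟨δ, hδ, h⟩
      exact ⟨δ, hδ, fun μ hμ => h μ (hst hμ)⟩
    · rintro s t ⟨δ, hδ, h⟩ ⟨δ', hδ', h'⟩
      refine ⟨min δ δ', lt_min hδ hδ', fun μ hμ hE => ?_⟩
      rcases hμ with hμ | hμ
      · exact lt_of_le_of_lt (measure_mono (Metric.cthickening_mono (min_le_left _ _) _)) (h μ hμ hE)
      · exact lt_of_le_of_lt (measure_mono (Metric.cthickening_mono (min_le_right _ _) _)) (h' μ hμ hE)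
    · intro μ₀ hμ₀
      have hlim := tendsto_measure_cthickening_of_isClosed (μ := (μ₀ : Measure X)) (s := C)
        ⟨1, one_pos, measure_ne_top _ _⟩ hC
      rw [h0 μ₀ hμ₀] at hlim
      obtain ⟨ρ, hρ, hball⟩ := Metric.eventually_nhds_iff.1 (hlim.eventually (gt_mem_nhds hpos))
      have h1 : (μ₀ : Measure X) (Metric.cthickening (ρ / 2) C) < (ν : Measure X) C := by
        apply hball
        rw [Real.dist_eq, sub_zero, abs_of_pos (by positivity)]
        linarith
      exact ⟨_, mem_nhdsWithin_of_mem_nhds (eventually_closed_lt Metric.isClosed_cthickening μ₀ h1),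
        ρ / 2, by positivity, fun μ hμ _ => hμ⟩
  obtain ⟨δ, hδ, hδ'⟩ := H
  have hdisj : Disjoint (Metric.thickening δ C)ᶜ C :=
    disjoint_compl_left_iff_subset.2 (Metric.self_subset_thickening hδ C)
  obtain ⟨h, hh0, hh1, hh01⟩ := exists_continuous_zero_one_of_isClosed
    (Metric.isOpen_thickening (δ := δ) (E := C)).isClosed_compl hC hdisj
  obtain ⟨μ, hμ, hle⟩ := exists_ergodic_max h ν hν
  have b1 : (ν : Measure X).real C ≤ ∫ x, h x ∂(ν : Measure X) := by
    rw [← integral_indicator_one hC.measurableSet]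
    apply integral_mono
    · exact (integrable_const (1 : ℝ)).indicator hC.measurableSet
    · exact integrable_cont ν h
    · intro x
      by_cases hx : x ∈ C
      · simp [hx, hh1 hx]
      · simp [hx, (hh01 x).1]
  have b2 : ∫ x, h x ∂(μ : Measure X) ≤ (μ : Measure X).real (Metric.cthickening δ C) := by
    rw [← integral_indicator_one Metric.isClosed_cthickening.measurableSet]
    apply integral_mono
    · exact integrable_cont μ h
    · exact (integrable_const (1 : ℝ)).indicator Metric.isClosed_cthickening.measurableSet
    · intro x
      by_cases hx : x ∈ Metric.cthickening δ C
      · simp [hx, (hh01 x).2]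
      · have : h x = 0 := hh0 fun hx' => hx (Metric.thickening_subset_cthickening _ _ hx')
        simp [hx, this]
  have b3 : (μ : Measure X).real (Metric.cthickening δ C) < (ν : Measure X).real C :=
    (ENNReal.toReal_lt_toReal (measure_ne_top _ _) (measure_ne_top _ _)).2 (hδ' μ hμ hμ)
  linarith


end Helpers

/-- If `G` is a countably infinite discrete amenable group acting minimally and
freely on an infinite compact metrizable space `X`, and `E_G(X)` is compact and
zero-dimensional in the weak* topology, then the action has the small boundary property. -/
theorem smallBoundaryProperty_of_compact_totallyDisconnected_ergodic
    {G X : Type*} [Group G] [Countable G] [Infinite G]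
    [MetricSpace X] [CompactSpace X] [Infinite X]
    [MeasurableSpace X] [BorelSpace X]
    [MulAction G X] [ContinuousConstSMul G X]
    (hG : AmenableGroup G)
    (hfree : FreeAction G X) (hmin : MinimalAction G X)
    (hcpt : IsCompact (EG G X)) (hzd : IsTotallyDisconnected (EG G X)) :
    SmallBoundaryProperty G X := by
  intro x U hU hx
  obtain ⟨V, hV, hxV, hVU, h⟩ := null_boundary hG hcpt hzd x U hU hx
  refine ⟨V, hV, hxV, hVU, fun μ hμ => ?_⟩
  rw [ProbabilityMeasure.null_iff_toMeasure_null]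
  exact null_of_ergodic_null hcpt _ isClosed_frontier h μ hμ
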